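/- arXiv:math/9412227 — 2 statements merged into one kernel-verified Lean document; each statement's English description precedes it below -/
import Mathlib

section
/- (Andrews' identity; Gessel–Stanton (1.1).) Let n be a natural number and a ∈ ℂ such that (3a/2)_k ≠ 0 and ((3a+1)/2)_k ≠ 0 for all 0 ≤ k ≤ n, and (3a+1)_n ≠ 0. Then ∑_{k=0}^{n} ((−n)_k (n+3a)_k (a)_k)/((3a/2)_k ((3a+1)/2)_k · k!) · (3/4)^k equals 0 if n is not divisible by 3, and equals (n! · (a+1)_{n/3})/((n/3)! · (3a+1)_n) if 3 divides n. -/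
/-- Pochhammer symbol (shifted factorial) of a complex number. -/
noncomputable def poch (a : ℂ) (k : ℕ) : ℂ := ∏ j ∈ Finset.range k, (a + j)

/-!
Clearing denominators turns the sum into `∑ (-3)ᵏ (n choose k) (a)ₖ (3a + 2k)ₙ₋ₖ`, divided by
`(3a)ₙ`. This sum is a polynomial in `a` with integer coefficients, so it suffices to evaluate it at
the integers `a = -N ≤ 0`, where it becomes, up to sign, `n!` times the coefficient of `Xⁿ` in
`(1 + X³)ᴺ = ((1 + X)³ - 3X(1 + X))ᴺ`.
-/

section Pochhammer

open Polynomial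
open scoped Nat

section CommSemiring

variable {R : Type*} [CommSemiring R]

theorem ascPochhammer_eval_add (x : R) (m n : ℕ) :
    (ascPochhammer R (m + n)).eval x =
      (ascPochhammer R m).eval x * (ascPochhammer R n).eval (x + m) := by
  simp [← ascPochhammer_mul]

theorem ascPochhammer_succ_eval_left (x : R) (n : ℕ) :
    (ascPochhammer R (n + 1)).eval x = x * (ascPochhammer R n).eval (x + 1) := by
  simp [ascPochhammer_succ_left]

theorem ascPochhammer_eval_eq_prod_range (x : R) (n : ℕ) :
    (ascPochhammer R n).eval x = ∏ j ∈ Finset.range n, (x + j) := by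
  induction n with
  | zero => simp
  | succ n ih => rw [ascPochhammer_succ_eval, ih, Finset.prod_range_succ]

theorem ascPochhammer_eval_ne_zero_of_le {x : R} {m n : ℕ} (hmn : m ≤ n)
    (hn : (ascPochhammer R n).eval x ≠ 0) : (ascPochhammer R m).eval x ≠ 0 := by
  rw [← Nat.add_sub_of_le hmn, ascPochhammer_eval_add] at hn
  exact left_ne_zero_of_mul hn

theorem ascPochhammer_eval_add_one_ne_zero_of_two_mul {x : R} {n : ℕ}
    (h : (ascPochhammer R (2 * n)).eval x ≠ 0) : (ascPochhammer R n).eval (x + 1) ≠ 0 := by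
  rcases n with _ | n
  · simpa using h
  · have h' := ascPochhammer_eval_ne_zero_of_le (show n + 1 + 1 ≤ 2 * (n + 1) by omega) h
    rw [ascPochhammer_succ_eval_left] at h'
    exact right_ne_zero_of_mul h'

theorem ascPochhammer_eval_mul_eval_mul_add_one {r : ℕ} (hr : r ≠ 0) (x : R) (m : ℕ) :
    (ascPochhammer R m).eval x * (ascPochhammer R (r * m)).eval (r * x + 1) =
      (ascPochhammer R m).eval (x + 1) * (ascPochhammer R (r * m)).eval (r * x) := by
  rcases m with _ | m
  · simp
  obtain ⟨N, hN⟩ : ∃ N, r * (m + 1) = N + 1 := Nat.exists_eq_succ_of_ne_zero (by positivity)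
  have hN' : (r : R) * (m + 1) = N + 1 := mod_cast congrArg (Nat.cast : ℕ → R) hN
  have last_factor : (r : R) * x + 1 + N = r * (x + 1 + m) := by
    rw [add_assoc, add_comm 1 (N : R), ← hN']
    ring
  rw [hN, ascPochhammer_succ_eval_left x, ascPochhammer_succ_eval_left (r * x),
    ascPochhammer_succ_eval N, ascPochhammer_succ_eval m, last_factor]
  ring

end CommSemiring

theorem ascPochhammer_eval_half_mul_eval_half {K : Type*} [Field K] [NeZero (2 : K)]
    (x : K) (k : ℕ) :
    (ascPochhammer K k).eval (x / 2) * (ascPochhammer K k).eval ((x + 1) / 2) * 4 ^ k =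
      (ascPochhammer K (2 * k)).eval x := by
  induction k with
  | zero => simp
  | succ k ih =>
    rw [mul_add_one, ascPochhammer_succ_eval (2 * k + 1), ascPochhammer_succ_eval (2 * k), ← ih,
      ascPochhammer_succ_eval, ascPochhammer_succ_eval]
    push_cast
    field_simp
    ring

theorem ascPochhammer_eval_two_mul_ne_zero {K : Type*} [Field K] [NeZero (2 : K)] {x : K} {k : ℕ}
    (h1 : (ascPochhammer K k).eval (x / 2) ≠ 0)
    (h2 : (ascPochhammer K k).eval ((x + 1) / 2) ≠ 0) :
    (ascPochhammer K (2 * k)).eval x ≠ 0 := by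
  have four_ne : (4 : K) ≠ 0 := by
    rw [show (4 : K) = 2 * 2 by norm_num]
    exact mul_ne_zero two_ne_zero two_ne_zero
  rw [← ascPochhammer_eval_half_mul_eval_half]
  exact mul_ne_zero (mul_ne_zero h1 h2) (pow_ne_zero k four_ne)

theorem ascPochhammer_eval_neg_natCast {R : Type*} [CommRing R] (n k : ℕ) :
    (ascPochhammer R k).eval (-(n : R)) = (-1) ^ k * n.descFactorial k := by
  rw [ascPochhammer_eval_neg_eq_descPochhammer, descPochhammer_eval_eq_descFactorial]

end Pochhammer

section PolynomialIdentity

open Polynomial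
open scoped Nat

theorem expand_three_one_add_X_pow (R : Type*) [CommRing R] (N : ℕ) :
    expand R 3 ((1 + X) ^ N) = ∑ k ∈ Finset.range (N + 1),
      C ((-3) ^ k * (N.choose k : R)) * ((1 + X) ^ (3 * N - 2 * k) * X ^ k) := by
  have cube : expand R 3 (1 + X) = -3 * X * (1 + X) + (1 + X) ^ 3 := by
    simp only [map_add, map_one, expand_X]
    ring
  rw [map_pow, cube, add_pow]
  refine Finset.sum_congr rfl fun k hk => ?_
  have hk : k ≤ N := Finset.mem_range_succ_iff.mp hk
  rw [show 3 * N - 2 * k = k + 3 * (N - k) by omega]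
  simp only [map_mul, map_pow, map_neg, map_ofNat, map_natCast, mul_pow, pow_add, pow_mul]
  ring

/-- The subtraction `3 * N - 2 * k` truncates only where `N.choose k = 0`. -/
theorem sum_neg_three_pow_mul_choose_mul_choose (n N : ℕ) :
    ∑ k ∈ Finset.range (n + 1),
        (-3 : ℤ) ^ k * N.choose k * (3 * N - 2 * k).choose (n - k) =
      if 3 ∣ n then (N.choose (n / 3) : ℤ) else 0 := by
  have coeff_eq := congrArg (coeff · n) (expand_three_one_add_X_pow ℤ N)
  simp only [coeff_expand three_pos, coeff_one_add_X_pow, finsetSum_coeff, coeff_C_mul,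
    coeff_mul_X_pow'] at coeff_eq
  rw [coeff_eq]
  refine Finset.sum_congr_of_eq_on_inter (fun k _ hk => ?_) (fun k _ hk => ?_) fun k hk _ => ?_
  · have hk : N < k := by simpa using hk
    simp [Nat.choose_eq_zero_of_lt hk]
  · have hk : ¬k ≤ n := by simpa using hk
    simp [hk]
  · simp [Finset.mem_range_succ_iff.mp hk]

theorem eq_of_forall_eval_neg_natCast {R : Type*} [CommRing R] [IsDomain R] [CharZero R]
    {p q : R[X]} (h : ∀ N : ℕ, p.eval (-(N : R)) = q.eval (-(N : R))) : p = q := by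
  refine eq_of_infinite_eval_eq p q ?_
  have inj : Function.Injective fun N : ℕ => -(N : R) := neg_injective.comp Nat.cast_injective
  exact (Set.infinite_range_of_injective inj).mono (Set.range_subset_iff.mpr h)

theorem factorial_mul_descFactorial_two_mul (m : ℕ) :
    m ! * (3 * m).descFactorial (2 * m) = (3 * m)! := by
  simpa [show 3 * m - 2 * m = m by omega] using
    Nat.factorial_mul_descFactorial (show 2 * m ≤ 3 * m by omega)

theorem sum_choose_mul_ascPochhammer_eval_neg_natCast (n N : ℕ) :
    ∑ k ∈ Finset.range (n + 1), (-3 : ℤ) ^ k * n.choose k *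
        ((ascPochhammer ℤ k).eval (-(N : ℤ)) *
          (ascPochhammer ℤ (n - k)).eval (3 * -(N : ℤ) + 2 * k)) =
      if 3 ∣ n then
        (n.descFactorial (2 * (n / 3)) : ℤ) * (ascPochhammer ℤ (n / 3)).eval (-(N : ℤ))
      else 0 := by
  have summand_eq : ∀ k ∈ Finset.range (n + 1), (-3 : ℤ) ^ k * n.choose k *
        ((ascPochhammer ℤ k).eval (-(N : ℤ)) *
          (ascPochhammer ℤ (n - k)).eval (3 * -(N : ℤ) + 2 * k)) =
      (-1) ^ n * n ! * ((-3 : ℤ) ^ k * N.choose k * (3 * N - 2 * k).choose (n - k)) := by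
    intro k hk
    have hkn : k ≤ n := Finset.mem_range_succ_iff.mp hk
    rcases lt_or_ge N k with hNk | hkN
    · simp [ascPochhammer_eval_neg_natCast, Nat.choose_eq_zero_of_lt hNk,
        Nat.descFactorial_of_lt hNk]
    have arg_eq : 3 * -(N : ℤ) + 2 * k = -((3 * N - 2 * k : ℕ) : ℤ) := by omega
    rw [arg_eq, ascPochhammer_eval_neg_natCast, ascPochhammer_eval_neg_natCast,
      Nat.descFactorial_eq_factorial_mul_choose, Nat.descFactorial_eq_factorial_mul_choose,
      ← Nat.choose_mul_factorial_mul_factorial hkn, ← pow_mul_pow_sub (-1 : ℤ) hkn]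
    push_cast
    ring
  rw [Finset.sum_congr rfl summand_eq, ← Finset.mul_sum, sum_neg_three_pow_mul_choose_mul_choose]
  split_ifs with h
  · obtain ⟨m, rfl⟩ := h
    rw [Nat.mul_div_cancel_left m three_pos, ascPochhammer_eval_neg_natCast,
      ← factorial_mul_descFactorial_two_mul, Nat.descFactorial_eq_factorial_mul_choose N, pow_mul]
    push_cast
    ring
  · simp

/-- When `3 ∣ n`, the factor `n.descFactorial (2 * (n / 3))` is the quotient `n! / (n / 3)!`. -/
theorem sum_choose_mul_ascPochhammer_eval {R : Type*} [CommRing R] (n : ℕ) (a : R) :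
    ∑ k ∈ Finset.range (n + 1), (-3) ^ k * n.choose k *
        ((ascPochhammer R k).eval a * (ascPochhammer R (n - k)).eval (3 * a + 2 * k)) =
      if 3 ∣ n then n.descFactorial (2 * (n / 3)) * (ascPochhammer R (n / 3)).eval a else 0 := by
  have polynomial_identity :
      ∑ k ∈ Finset.range (n + 1), (-3 : ℤ[X]) ^ k * (n.choose k : ℤ[X]) *
        (ascPochhammer ℤ k * (ascPochhammer ℤ (n - k)).comp (3 * X + 2 * (k : ℤ[X]))) =
      if 3 ∣ n then (n.descFactorial (2 * (n / 3)) : ℤ[X]) * ascPochhammer ℤ (n / 3) else 0 := by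
    refine eq_of_forall_eval_neg_natCast fun N => ?_
    have h := sum_choose_mul_ascPochhammer_eval_neg_natCast n N
    rw [apply_ite (eval _)]
    simpa [eval_finsetSum] using h
  have aeval_ascPochhammer (x : R) (k : ℕ) :
      aeval x (ascPochhammer ℤ k) = (ascPochhammer R k).eval x :=
    (ascPochhammer_eval₂ (algebraMap ℤ R) k x).symm
  have h := congrArg (aeval a) polynomial_identity
  rw [apply_ite (aeval a)] at h
  simpa [aeval_comp, aeval_ascPochhammer, map_ofNat] using h

end PolynomialIdentity

section HypergeometricSum

open Polynomial
open scoped Nat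

variable {K : Type*} [Field K] [CharZero K]

theorem ascPochhammer_quotient_eq_choose_mul {b : K} {n k : ℕ}
    (hk : k ≤ n) (hb : (ascPochhammer K n).eval b ≠ 0)
    (h1 : (ascPochhammer K k).eval (b / 2) ≠ 0)
    (h2 : (ascPochhammer K k).eval ((b + 1) / 2) ≠ 0) :
    (ascPochhammer K k).eval (-(n : K)) * (ascPochhammer K k).eval (n + b) /
        ((ascPochhammer K k).eval (b / 2) * (ascPochhammer K k).eval ((b + 1) / 2) * k !) =
      (-4) ^ k * n.choose k * (ascPochhammer K (n - k)).eval (b + 2 * k) /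
        (ascPochhammer K n).eval b := by
  have hfac : (k ! : K) ≠ 0 := mod_cast k.factorial_ne_zero
  have split_add : (ascPochhammer K n).eval b * (ascPochhammer K k).eval (n + b) =
      (ascPochhammer K (2 * k)).eval b * (ascPochhammer K (n - k)).eval (b + 2 * k) := by
    have h := ascPochhammer_eval_add b (2 * k) (n - k)
    rw [show 2 * k + (n - k) = n + k by omega, ascPochhammer_eval_add] at h
    simpa [add_comm] using h
  rw [div_eq_div_iff (by positivity) hb, ascPochhammer_eval_neg_natCast,
    Nat.descFactorial_eq_factorial_mul_choose, neg_pow (4 : K)]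
  rw [← ascPochhammer_eval_half_mul_eval_half] at split_add
  push_cast
  linear_combination (-1) ^ k * k ! * n.choose k * split_add

theorem sum_ascPochhammer_quotient_eq (n : ℕ) {b : K} (z : K) (c : ℕ → K)
    (h1 : (ascPochhammer K n).eval (b / 2) ≠ 0)
    (h2 : (ascPochhammer K n).eval ((b + 1) / 2) ≠ 0) :
    ∑ k ∈ Finset.range (n + 1),
        (ascPochhammer K k).eval (-(n : K)) * (ascPochhammer K k).eval (n + b) * c k /
          ((ascPochhammer K k).eval (b / 2) * (ascPochhammer K k).eval ((b + 1) / 2) * k !) *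
          (z / 4) ^ k =
      (∑ k ∈ Finset.range (n + 1), (-z) ^ k * n.choose k *
        (c k * (ascPochhammer K (n - k)).eval (b + 2 * k))) / (ascPochhammer K n).eval b := by
  have hb : (ascPochhammer K n).eval b ≠ 0 :=
    ascPochhammer_eval_ne_zero_of_le (by omega) (ascPochhammer_eval_two_mul_ne_zero h1 h2)
  rw [Finset.sum_div]
  refine Finset.sum_congr rfl fun k hk => ?_
  have hk : k ≤ n := Finset.mem_range_succ_iff.mp hk
  rw [mul_div_right_comm, ascPochhammer_quotient_eq_choose_mul hk hb
    (ascPochhammer_eval_ne_zero_of_le hk h1) (ascPochhammer_eval_ne_zero_of_le hk h2),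
    show -z = -4 * (z / 4) by ring, mul_pow]
  ring

theorem descFactorial_mul_ascPochhammer_eval_div {a : K} {m : ℕ}
    (h : (ascPochhammer K (3 * m)).eval (3 * a) ≠ 0)
    (h' : (ascPochhammer K (3 * m)).eval (3 * a + 1) ≠ 0) :
    (3 * m).descFactorial (2 * m) * (ascPochhammer K m).eval a /
        (ascPochhammer K (3 * m)).eval (3 * a) =
      (3 * m)! * (ascPochhammer K m).eval (a + 1) /
        (m ! * (ascPochhammer K (3 * m)).eval (3 * a + 1)) := by
  have hfac : (m ! : K) ≠ 0 := mod_cast m.factorial_ne_zero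
  have shift := ascPochhammer_eval_mul_eval_mul_add_one three_ne_zero a m
  rw [div_eq_div_iff h (mul_ne_zero hfac h'), ← factorial_mul_descFactorial_two_mul]
  push_cast at shift ⊢
  linear_combination (m ! : K) * (3 * m).descFactorial (2 * m) * shift

theorem andrews_gessel_stanton_1_1_general (n : ℕ) (a : K)
    (h1 : (ascPochhammer K n).eval (3 * a / 2) ≠ 0)
    (h2 : (ascPochhammer K n).eval ((3 * a + 1) / 2) ≠ 0) :
    ∑ k ∈ Finset.range (n + 1),
        (ascPochhammer K k).eval (-(n : K)) * (ascPochhammer K k).eval (n + 3 * a) *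
            (ascPochhammer K k).eval a /
          ((ascPochhammer K k).eval (3 * a / 2) * (ascPochhammer K k).eval ((3 * a + 1) / 2) *
            k !) *
          (3 / 4) ^ k =
      if 3 ∣ n then
        n ! * (ascPochhammer K (n / 3)).eval (a + 1) /
          ((n / 3)! * (ascPochhammer K n).eval (3 * a + 1))
      else 0 := by
  have h2n := ascPochhammer_eval_two_mul_ne_zero h1 h2
  have hn : (ascPochhammer K n).eval (3 * a) ≠ 0 :=
    ascPochhammer_eval_ne_zero_of_le (by omega) h2n
  rw [sum_ascPochhammer_quotient_eq n 3 _ h1 h2, sum_choose_mul_ascPochhammer_eval]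
  split_ifs with h
  · obtain ⟨m, rfl⟩ := h
    rw [Nat.mul_div_cancel_left m three_pos]
    exact descFactorial_mul_ascPochhammer_eval_div hn
      (ascPochhammer_eval_add_one_ne_zero_of_two_mul h2n)
  · exact zero_div _

end HypergeometricSum

theorem poch_eq_ascPochhammer_eval (a : ℂ) (k : ℕ) : poch a k = (ascPochhammer ℂ k).eval a :=
  (ascPochhammer_eval_eq_prod_range a k).symm

/-- Andrews' identity (Gessel–Stanton (1.1)). -/
theorem andrews_gessel_stanton_1_1 (n : ℕ) (a : ℂ)
    (h1 : ∀ k ≤ n, poch (3 * a / 2) k ≠ 0)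
    (h2 : ∀ k ≤ n, poch ((3 * a + 1) / 2) k ≠ 0)
    (hn : poch (3 * a + 1) n ≠ 0) :
    ∑ k ∈ Finset.range (n + 1),
        poch (-(n : ℂ)) k * poch ((n : ℂ) + 3 * a) k * poch a k /
          (poch (3 * a / 2) k * poch ((3 * a + 1) / 2) k * (k.factorial : ℂ)) *
          (3 / 4 : ℂ) ^ k
      = if 3 ∣ n then
          (n.factorial : ℂ) * poch (a + 1) (n / 3) /
            (((n / 3).factorial : ℂ) * poch (3 * a + 1) n)
        else 0 := by
  simp only [poch_eq_ascPochhammer_eval] at h1 h2 ⊢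
  exact andrews_gessel_stanton_1_1_general n a (h1 n le_rfl) (h2 n le_rfl)
end

section
/- (Gessel–Stanton open problem (6.3).) Let n be a natural number, n ≥ 1, and a ∈ ℂ such that (a/2)_k ≠ 0 and (2a+1+3n)_k ≠ 0 for all 0 ≤ k ≤ n. Then ∑_{k=0}^{n} ((a+1/2)_k (a)_k (−n)_k ((2a+1)/3+n)_k (a/2+1)_k)/((1/2)_k (−3n)_k (2a+1+3n)_k (a/2)_k · k!) · 9^k = (((2a+2)/3)_n (2a/3+1)_n)/((2/3)_n (1/3)_n). -/
/-!
Dividing the summand by the right-hand side and collecting the Pochhammer symbols by the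
multiplication formula gives, with `n = k + m`, a term `wzTerm a k m` free of subtractions, and the
claim becomes `∑ k + m = n, wzTerm a k m = 1`. The WZ method finds a mate `wzMate` for which
`wzTerm a k (m + 1) - wzTerm a k m` is a difference of two neighbours on an antidiagonal, so that
the change of the sum from `n` to `n + 1` telescopes to zero.

Going down from `n` to `0` divides by factors `2 * a + j` that the hypotheses do not control. The
argument is therefore carried out for `2 * a ∉ {0, -1, -2, …}`, and the remaining values of `a`
follow by continuity.
-/

open Finset Topology
open scoped Nat

section Pochhammer

@[simp]
theorem poch_zero (x : ℂ) : poch x 0 = 1 := prod_range_zero _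

theorem poch_succ (x : ℂ) (k : ℕ) : poch x (k + 1) = poch x k * (x + k) := prod_range_succ _ _

theorem poch_add (x : ℂ) (m n : ℕ) : poch x (m + n) = poch x m * poch (x + m) n := by
  simp only [poch, prod_range_add, Nat.cast_add, add_assoc]

theorem poch_one_left (k : ℕ) : poch 1 k = k ! := by
  simp only [poch, ← prod_range_add_one_eq_factorial, Nat.cast_prod, Nat.cast_add, Nat.cast_one,
    add_comm]

theorem poch_ne_zero_iff {x : ℂ} {k : ℕ} : poch x k ≠ 0 ↔ ∀ j < k, x + j ≠ 0 := by
  simp only [poch, prod_ne_zero_iff, mem_range]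

theorem mul_poch_add_one (x : ℂ) (k : ℕ) : x * poch (x + 1) k = poch x k * (x + k) := by
  rw [← poch_succ, add_comm k 1, poch_add, poch_succ]
  simp

theorem poch_neg_mul_factorial (k m : ℕ) :
    poch (-((k + m : ℕ) : ℂ)) k * m ! = (-1) ^ k * (k + m)! := by
  induction k generalizing m with
  | zero => simp
  | succ k ih =>
    have h := ih (m + 1)
    rw [Nat.factorial_succ, ← add_assoc, add_right_comm k m 1] at h
    rw [poch_succ, pow_succ, mul_right_comm _ (-1 : ℂ), ← h]
    push_cast
    ring

/-- The multiplication formula of Gauss. -/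
theorem poch_nat_mul (d : ℕ) (x : ℂ) (n : ℕ) :
    poch (d * x) (d * n) = d ^ (d * n) * ∏ j ∈ range d, poch (x + j / d) n := by
  induction n with
  | zero => simp
  | succ n ih =>
    have block : poch (d * x + (d * n : ℕ)) d = d ^ d * ∏ j ∈ range d, (x + j / d + n) := by
      rw [poch, ← card_range d, ← prod_const, card_range, ← prod_mul_distrib]
      refine prod_congr rfl fun j hj => ?_
      have hd : (d : ℂ) ≠ 0 := Nat.cast_ne_zero.2 (Nat.ne_zero_of_lt (mem_range.1 hj))
      push_cast
      field_simp
      ring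
    simp only [mul_add_one, poch_add, ih, block, poch_succ, prod_mul_distrib, pow_add]
    ring

theorem poch_two_mul (x : ℂ) (n : ℕ) :
    poch (2 * x) (2 * n) = 4 ^ n * poch x n * poch (x + 1 / 2) n := by
  have h2 : (2 : ℂ) ^ 2 = 4 := by norm_num
  simpa [prod_range_succ, pow_mul, ← mul_assoc, h2] using poch_nat_mul 2 x n

theorem poch_three_mul (x : ℂ) (n : ℕ) :
    poch (3 * x) (3 * n) = 27 ^ n * poch x n * poch (x + 1 / 3) n * poch (x + 2 / 3) n := by
  have h3 : (3 : ℂ) ^ 3 = 27 := by norm_num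
  simpa [prod_range_succ, pow_mul, ← mul_assoc, h3] using poch_nat_mul 3 x n

theorem factorial_two_mul_eq_poch (n : ℕ) : ((2 * n)! : ℂ) = 4 ^ n * poch (1 / 2) n * n ! := by
  have h := poch_two_mul (1 / 2) n
  rwa [mul_one_div_cancel two_ne_zero, poch_one_left, add_halves, poch_one_left] at h

theorem factorial_three_mul_eq_poch (n : ℕ) :
    ((3 * n)! : ℂ) = 27 ^ n * poch (1 / 3) n * poch (2 / 3) n * n ! := by
  have h := poch_three_mul (1 / 3) n
  rwa [mul_one_div_cancel three_ne_zero, poch_one_left,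
    show (1 / 3 + 1 / 3 : ℂ) = 2 / 3 by norm_num,
    show (1 / 3 + 2 / 3 : ℂ) = 1 by norm_num, poch_one_left] at h

theorem poch_one_half_ne_zero (n : ℕ) : poch (1 / 2) n ≠ 0 := by
  have h : 4 ^ n * poch (1 / 2) n * n ! ≠ 0 := by
    rw [← factorial_two_mul_eq_poch]
    exact Nat.cast_ne_zero.2 (Nat.factorial_ne_zero _)
  exact right_ne_zero_of_mul (left_ne_zero_of_mul h)

theorem poch_neg_natCast_ne_zero {k n : ℕ} (h : k ≤ n) : poch (-(n : ℂ)) k ≠ 0 := by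
  obtain ⟨m, rfl⟩ := Nat.exists_eq_add_of_le h
  refine left_ne_zero_of_mul (b := (m ! : ℂ)) ?_
  rw [poch_neg_mul_factorial]
  simp [Nat.factorial_ne_zero]

theorem poch_add_one_div_poch {x : ℂ} {k : ℕ} (hx : x ≠ 0) (h : poch x k ≠ 0) :
    poch (x + 1) k / poch x k = (x + k) / x := by
  rw [div_eq_div_iff h hx, mul_comm, mul_poch_add_one, mul_comm]

theorem poch_mul_poch_add_half_div (a : ℂ) (k : ℕ) :
    poch a k * poch (a + 1 / 2) k / (poch (1 / 2) k * k !) =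
      poch (2 * a) (2 * k) / (2 * k)! := by
  rw [poch_two_mul, factorial_two_mul_eq_poch]
  field_simp

theorem poch_neg_div_poch_neg_three_mul (k m : ℕ) :
    poch (-((k + m : ℕ) : ℂ)) k / poch (-3 * ((k + m : ℕ) : ℂ)) k =
      (k + m)! * (2 * k + 3 * m)! / (m ! * (3 * (k + m))!) := by
  have numerator := poch_neg_mul_factorial k m
  have denominator := poch_neg_mul_factorial k (2 * k + 3 * m)
  rw [show k + (2 * k + 3 * m) = 3 * (k + m) by ring, Nat.cast_mul, Nat.cast_ofNat,
    ← neg_mul] at denominator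
  have hd : poch (-3 * ((k + m : ℕ) : ℂ)) k ≠ 0 := by
    simpa using poch_neg_natCast_ne_zero (show k ≤ 3 * (k + m) by omega)
  rw [div_eq_div_iff hd (by simp [Nat.factorial_ne_zero]), ← mul_assoc, numerator,
    mul_assoc _ _ (poch _ _), mul_comm _ (poch _ _), denominator]
  ring

@[fun_prop]
theorem continuous_poch (k : ℕ) : Continuous fun x => poch x k := by
  unfold poch
  fun_prop

end Pochhammer

section WZ

theorem sum_antidiagonal_succ_left_sub_succ_right {M : Type*} [AddCommGroup M]
    (G : ℕ → ℕ → M) (n : ℕ) :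
    ∑ p ∈ antidiagonal n, (G (p.1 + 1) p.2 - G p.1 (p.2 + 1)) = G (n + 1) 0 - G 0 (n + 1) := by
  have h := (Finset.Nat.sum_antidiagonal_succ (n := n) (f := fun p => G p.1 p.2)).symm.trans
    Finset.Nat.sum_antidiagonal_succ'
  rw [sum_sub_distrib, sub_eq_sub_iff_add_eq_add, add_comm, h, add_comm]

theorem sum_antidiagonal_eq_of_wz {M : Type*} [AddCommGroup M] {F G : ℕ → ℕ → M}
    (wz : ∀ k m, F k (m + 1) - F k m = G (k + 1) m - G k (m + 1))
    (left : ∀ m, G 0 m = 0) (right : ∀ k, G (k + 1) 0 = -F (k + 1) 0) (n : ℕ) :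
    ∑ p ∈ antidiagonal n, F p.1 p.2 = F 0 0 := by
  induction n with
  | zero => simp
  | succ n ih =>
    have h := sum_antidiagonal_succ_left_sub_succ_right G n
    simp only [← wz, sum_sub_distrib, left, right, ih] at h
    rw [Finset.Nat.sum_antidiagonal_succ', sub_eq_iff_eq_add.1 h]
    abel

/-- The summand of (6.3) divided by its right-hand side, where `m = n - k`. -/
noncomputable def wzTerm (a : ℂ) (k m : ℕ) : ℂ :=
  9 ^ k * ((a + 2 * k) / a) * (poch (2 * a) (2 * k) / (2 * k)!) * ((2 * k + 3 * m)! / m !) *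
    (poch ((2 * a + 1) / 3) (2 * k + m) / poch (2 * a + 1) (4 * k + 3 * m))

/-- The WZ mate of `wzTerm`. It vanishes at `k = 0`; splitting that case off keeps its factor
`1 / (2 * k - 2)!` free of truncated subtraction. -/
noncomputable def wzMate (a : ℂ) : ℕ → ℕ → ℂ
  | 0, _ => 0
  | k + 1, m =>
    -3 * 9 ^ k * ((a + 3 * (k + m) + 2) / a) * (poch (2 * a) (2 * k + 2) / (2 * k)!) *
      ((2 * k + 3 * m)! / m !) *
      (poch ((2 * a + 1) / 3) (2 * k + m + 1) / poch (2 * a + 1) (4 * k + 3 * m + 3))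

variable {a : ℂ}

theorem poch_two_mul_add_one_ne_zero (ha : ∀ j : ℕ, 2 * a + j ≠ 0) (n : ℕ) :
    poch (2 * a + 1) n ≠ 0 :=
  poch_ne_zero_iff.2 fun j _ => by simpa [add_assoc, add_comm] using ha (j + 1)

theorem wzMate_succ_zero (ha : ∀ j : ℕ, 2 * a + j ≠ 0) (k : ℕ) :
    wzMate a (k + 1) 0 = -wzTerm a (k + 1) 0 := by
  have hlast : a + 2 * k + 2 ≠ 0 := fun h =>
    ha (4 * k + 4) (by push_cast; linear_combination 2 * h)
  have factorial_ne (n : ℕ) : (n ! : ℂ) ≠ 0 := Nat.cast_ne_zero.2 n.factorial_ne_zero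
  have third_factor : (2 * a + 1) / 3 + ((2 * k + 1 : ℕ) : ℂ) = 2 / 3 * (a + 3 * k + 2) := by
    push_cast; ring
  have full_factor : 2 * a + 1 + ((4 * k + 3 : ℕ) : ℂ) = 2 * (a + 2 * k + 2) := by
    push_cast; ring
  have numerator_factor : a + 2 * ((k + 1 : ℕ) : ℂ) = a + 2 * k + 2 := by push_cast; ring
  simp only [wzMate, wzTerm, mul_zero, add_zero, Nat.cast_zero, mul_add_one,
    poch_succ _ (4 * k + 3), poch_succ ((2 * a + 1) / 3) (2 * k + 1), Nat.factorial_zero,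
    third_factor, full_factor, numerator_factor]
  generalize a + 2 * (k : ℂ) + 2 = c at *
  have := factorial_ne (2 * k)
  have := factorial_ne (2 * k + 2)
  field_simp
  ring

/-- The common factor through which the four terms of the WZ equation are compared. -/
noncomputable def wzCore (a : ℂ) (k m : ℕ) : ℂ :=
  9 ^ k / a * (poch (2 * a) (2 * k) / (2 * k)!) * ((2 * k + 3 * m)! / m !) *
    (poch ((2 * a + 1) / 3) (2 * k + m) / poch (2 * a + 1) (4 * k + 3 * m + 3))

theorem wzTerm_eq_wzCore_mul (ha : ∀ j : ℕ, 2 * a + j ≠ 0) (k m : ℕ) :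
    wzTerm a k m = wzCore a k m *
      ((a + 2 * k) * poch (2 * a + 1 + ((4 * k + 3 * m : ℕ) : ℂ)) 3) := by
  have h := poch_two_mul_add_one_ne_zero ha (4 * k + 3 * m + 3)
  rw [poch_add] at h
  rw [wzTerm, wzCore, poch_add _ (4 * k + 3 * m), ← mul_div_mul_right _ _ (right_ne_zero_of_mul h)]
  ring

theorem wzTerm_succ_right_eq_wzCore_mul (a : ℂ) (k m : ℕ) :
    wzTerm a k (m + 1) = wzCore a k m * ((a + 2 * k) * (2 * k + 3 * m + 1) * (2 * k + 3 * m + 2) *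
      (2 * k + 3 * m + 3) / (m + 1) * ((2 * a + 1) / 3 + (2 * k + m))) := by
  simp only [wzTerm, wzCore, mul_add_one, ← add_assoc, poch_succ _ (2 * k + m),
    Nat.factorial_succ m, Nat.factorial_succ (2 * k + 3 * m), Nat.factorial_succ (_ + 1)]
  push_cast
  field_simp
  ring

theorem wzMate_succ_left_eq_wzCore_mul (a : ℂ) (k m : ℕ) :
    wzMate a (k + 1) m = wzCore a k m * (-3 * (a + 3 * (k + m) + 2) *
      ((2 * a + 2 * k) * (2 * a + (2 * k + 1))) * ((2 * a + 1) / 3 + (2 * k + m))) := by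
  simp only [wzMate, wzCore, poch_succ _ (2 * k + m), poch_succ _ (2 * k), poch_succ _ (2 * k + 1)]
  push_cast
  ring

theorem wzMate_succ_right_eq_wzCore_mul (ha : ∀ j : ℕ, 2 * a + j ≠ 0) (k m : ℕ) :
    wzMate a k (m + 1) = wzCore a k m * (-(a + 3 * (k + m) + 2) / 3 * (2 * k * (2 * k - 1)) *
      ((2 * k + 3 * m + 1) / (m + 1)) * (2 * a + 1 + ((4 * k + 3 * m + 2 : ℕ) : ℂ))) := by
  cases k with
  | zero => simp [wzMate]
  | succ k =>
    have hlast : 2 * a + 1 + ((4 * k + 3 * m + 6 : ℕ) : ℂ) ≠ 0 := fun h =>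
      ha (4 * k + 3 * m + 7) (by push_cast at h ⊢; linear_combination h)
    have hodd : (2 * (k + 1) - 1 : ℂ) ≠ 0 := by
      rw [show (2 * (k + 1) - 1 : ℂ) = (2 * k + 1 : ℕ) by push_cast; ring]
      exact Nat.cast_ne_zero.2 (Nat.succ_ne_zero _)
    have hfact : ((2 * k + 2)! : ℂ) = 2 * (k + 1) * (2 * (k + 1) - 1) * (2 * k)! := by
      rw [Nat.factorial_succ, Nat.factorial_succ]
      push_cast
      ring
    rw [wzMate, wzCore, show 2 * (k + 1) = 2 * k + 2 by ring,
      show 2 * k + 3 * (m + 1) = 2 * k + 2 + 3 * m + 1 by ring,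
      show 2 * k + (m + 1) + 1 = 2 * k + 2 + m by ring,
      show 4 * k + 3 * (m + 1) + 3 = 4 * k + 3 * m + 6 by ring,
      show 4 * (k + 1) + 3 * m + 3 = 4 * k + 3 * m + 6 + 1 by ring,
      show 4 * (k + 1) + 3 * m + 2 = 4 * k + 3 * m + 6 by ring,
      poch_succ _ (4 * k + 3 * m + 6), Nat.factorial_succ m, Nat.factorial_succ (_ + 3 * m), hfact]
    generalize 2 * a + 1 + ((4 * k + 3 * m + 6 : ℕ) : ℂ) = c at *
    push_cast
    generalize 2 * ((k : ℂ) + 1) - 1 = y at *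
    field_simp
    ring

theorem wzTerm_succ_sub (ha : ∀ j : ℕ, 2 * a + j ≠ 0) (k m : ℕ) :
    wzTerm a k (m + 1) - wzTerm a k m = wzMate a (k + 1) m - wzMate a k (m + 1) := by
  rw [wzTerm_succ_right_eq_wzCore_mul, wzTerm_eq_wzCore_mul ha, wzMate_succ_left_eq_wzCore_mul,
    wzMate_succ_right_eq_wzCore_mul ha, ← mul_sub, ← mul_sub]
  congr 1
  simp only [poch_succ, poch_zero]
  push_cast
  field_simp
  ring

theorem sum_antidiagonal_wzTerm (ha : ∀ j : ℕ, 2 * a + j ≠ 0) (n : ℕ) :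
    ∑ p ∈ antidiagonal n, wzTerm a p.1 p.2 = 1 := by
  rw [sum_antidiagonal_eq_of_wz (wzTerm_succ_sub ha) (fun _ => rfl) (wzMate_succ_zero ha)]
  have ha0 : a ≠ 0 := by simpa using ha 0
  simp [wzTerm, ha0]

end WZ

section Summand

/-- The summand of (6.3). -/
noncomputable def gsSummand (n : ℕ) (a : ℂ) (k : ℕ) : ℂ :=
  poch (a + 1 / 2) k * poch a k * poch (-(n : ℂ)) k *
      poch ((2 * a + 1) / 3 + (n : ℂ)) k * poch (a / 2 + 1) k /
    (poch (1 / 2) k * poch (-3 * (n : ℂ)) k *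
      poch (2 * a + 1 + 3 * (n : ℂ)) k * poch (a / 2) k *
      (k.factorial : ℂ)) * (9 : ℂ) ^ k

/-- The right-hand side of (6.3). -/
noncomputable def gsClosedForm (n : ℕ) (a : ℂ) : ℂ :=
  poch ((2 * a + 2) / 3) n * poch (2 * a / 3 + 1) n / (poch (2 / 3) n * poch (1 / 3) n)

theorem gsClosedForm_eq {n : ℕ} {a : ℂ} (h : poch ((2 * a + 1) / 3) n ≠ 0) :
    gsClosedForm n a =
      n ! * poch (2 * a + 1) (3 * n) / ((3 * n)! * poch ((2 * a + 1) / 3) n) := by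
  have trisection := poch_three_mul ((2 * a + 1) / 3) n
  rw [show 3 * ((2 * a + 1) / 3) = 2 * a + 1 by ring,
    show (2 * a + 1) / 3 + 1 / 3 = (2 * a + 2) / 3 by ring,
    show (2 * a + 1) / 3 + 2 / 3 = 2 * a / 3 + 1 by ring] at trisection
  rw [gsClosedForm, trisection, factorial_three_mul_eq_poch]
  have hn : (n ! : ℂ) ≠ 0 := Nat.cast_ne_zero.2 n.factorial_ne_zero
  field_simp

theorem gsSummand_eq_mul_wzTerm {a : ℂ} (ha : ∀ j : ℕ, 2 * a + j ≠ 0) (k m : ℕ) :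
    gsSummand (k + m) a k = gsClosedForm (k + m) a * wzTerm a k m := by
  have ha0 : a ≠ 0 := by simpa using ha 0
  have half : poch (a / 2) k ≠ 0 :=
    poch_ne_zero_iff.2 fun j _ h => ha (4 * j) (by push_cast; linear_combination 4 * h)
  have third : poch ((2 * a + 1) / 3) (k + m) ≠ 0 :=
    poch_ne_zero_iff.2 fun j _ h => ha (3 * j + 1) (by push_cast; linear_combination 3 * h)
  have full := poch_two_mul_add_one_ne_zero ha (3 * (k + m))
  have third_split : poch ((2 * a + 1) / 3 + (k + m : ℕ)) k =
      poch ((2 * a + 1) / 3) (2 * k + m) / poch ((2 * a + 1) / 3) (k + m) := by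
    rw [eq_div_iff third, mul_comm, ← poch_add]
    congr 1; ring
  have full_split : poch (2 * a + 1 + 3 * (k + m : ℕ)) k =
      poch (2 * a + 1) (4 * k + 3 * m) / poch (2 * a + 1) (3 * (k + m)) := by
    have h := poch_add (2 * a + 1) (3 * (k + m)) k
    rw [show 3 * (k + m) + k = 4 * k + 3 * m by ring, Nat.cast_mul, Nat.cast_ofNat] at h
    rw [eq_div_iff full, mul_comm, ← h]
  calc gsSummand (k + m) a k
      = poch a k * poch (a + 1 / 2) k / (poch (1 / 2) k * k !) *
          (poch (-((k + m : ℕ) : ℂ)) k / poch (-3 * ((k + m : ℕ) : ℂ)) k) *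
          (poch (a / 2 + 1) k / poch (a / 2) k) *
          (poch ((2 * a + 1) / 3 + (k + m : ℕ)) k / poch (2 * a + 1 + 3 * (k + m : ℕ)) k) *
          9 ^ k := by
        rw [gsSummand]
        ring
    _ = gsClosedForm (k + m) a * wzTerm a k m := by
        rw [poch_mul_poch_add_half_div, poch_neg_div_poch_neg_three_mul,
          poch_add_one_div_poch (div_ne_zero ha0 two_ne_zero) half, third_split, full_split,
          gsClosedForm_eq third, wzTerm]
        field_simp

theorem sum_gsSummand_of_generic {a : ℂ} (ha : ∀ j : ℕ, 2 * a + j ≠ 0) (n : ℕ) :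
    ∑ k ∈ range (n + 1), gsSummand n a k = gsClosedForm n a := by
  rw [← Finset.Nat.sum_antidiagonal_eq_sum_range_succ fun k _ => gsSummand n a k]
  calc ∑ p ∈ antidiagonal n, gsSummand n a p.1
      = ∑ p ∈ antidiagonal n, gsClosedForm n a * wzTerm a p.1 p.2 := by
        refine sum_congr rfl fun p hp => ?_
        rw [← mem_antidiagonal.1 hp, gsSummand_eq_mul_wzTerm ha]
    _ = gsClosedForm n a := by rw [← mul_sum, sum_antidiagonal_wzTerm ha, mul_one]

end Summand

section Continuity

theorem dense_setOf_two_mul_add_natCast_ne_zero : Dense {x : ℂ | ∀ j : ℕ, 2 * x + j ≠ 0} := by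
  refine ((Set.countable_range fun j : ℕ => -(j : ℂ) / 2).dense_compl ℂ).mono ?_
  intro x hx j hj
  exact hx ⟨j, by linear_combination -hj / 2⟩

theorem continuousAt_gsSummand {n k : ℕ} {a : ℂ} (hk : k ≤ n) (h1 : poch (a / 2) k ≠ 0)
    (h2 : poch (2 * a + 1 + 3 * (n : ℂ)) k ≠ 0) : ContinuousAt (gsSummand n · k) a := by
  have h3 : poch (-3 * (n : ℂ)) k ≠ 0 := by
    simpa using poch_neg_natCast_ne_zero (show k ≤ 3 * n by omega)
  have h4 : (k ! : ℂ) ≠ 0 := Nat.cast_ne_zero.2 k.factorial_ne_zero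
  unfold gsSummand
  refine .mul (.div (Continuous.continuousAt ?_) (Continuous.continuousAt ?_) ?_) continuousAt_const
  · fun_prop
  · fun_prop
  · simp only [mul_ne_zero_iff]
    exact ⟨⟨⟨⟨poch_one_half_ne_zero k, h3⟩, h2⟩, h1⟩, h4⟩

theorem continuous_gsClosedForm (n : ℕ) : Continuous (gsClosedForm n) := by
  unfold gsClosedForm
  fun_prop

end Continuity

/-- Gessel–Stanton open problem (6.3). -/
theorem gessel_stanton_6_3 (n : ℕ) (hn : 1 ≤ n) (a : ℂ)
    (h1 : ∀ k ≤ n, poch (a / 2) k ≠ 0)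
    (h2 : ∀ k ≤ n, poch (2 * a + 1 + 3 * (n : ℂ)) k ≠ 0) :
    ∑ k ∈ Finset.range (n + 1),
        poch (a + 1 / 2) k * poch a k * poch (-(n : ℂ)) k *
            poch ((2 * a + 1) / 3 + (n : ℂ)) k * poch (a / 2 + 1) k /
          (poch (1 / 2) k * poch (-3 * (n : ℂ)) k *
            poch (2 * a + 1 + 3 * (n : ℂ)) k * poch (a / 2) k *
            (k.factorial : ℂ)) * (9 : ℂ) ^ k
      = poch ((2 * a + 2) / 3) n * poch (2 * a / 3 + 1) n /
          (poch (2 / 3) n * poch (1 / 3) n) := by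
  change ∑ k ∈ range (n + 1), gsSummand n a k = gsClosedForm n a
  have sum_continuousAt : ContinuousAt (fun x => ∑ k ∈ range (n + 1), gsSummand n x k) a := by
    refine tendsto_finsetSum _ fun k hk => ?_
    have hk : k ≤ n := Nat.lt_succ_iff.1 (mem_range.1 hk)
    exact continuousAt_gsSummand hk (h1 k hk) (h2 k hk)
  have frequently_generic : ∃ᶠ x : ℂ in 𝓝 a, ∀ j : ℕ, 2 * x + j ≠ 0 :=
    mem_closure_iff_frequently.1 (dense_setOf_two_mul_add_natCast_ne_zero a)
  exact tendsto_nhds_unique_of_frequently_eq sum_continuousAt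
    (continuous_gsClosedForm n).continuousAt
    (frequently_generic.mono fun x hx => sum_gsSummand_of_generic hx n)
end
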